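/- Let Σ denote the punctured torus T² ∖ {pt} equipped with a symplectic (area) form of total area one, and let B²_R denote the open disk of radius R in ℝ² with the standard area form. For every R > 0 there exists a smooth symplectic embedding of B²_R × Σ (with the product symplectic form) into ℝ⁴ with its standard symplectic form dp_1∧dq_1 + dp_2∧dq_2. -/

import Mathlib

/-!
Lemma 3 (after Guth): for every `R > 0` the product `B²_R × Σ` embeds symplectically
into `ℝ⁴`, where `Σ = T² ∖ {pt}` carries a symplectic form of total area one.

We use the flat model `T² = ℝ²/ℤ²` with its standard area form (total area one; by
Moser's theorem this is no loss of generality), the puncture being the lattice point.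
A smooth map `B²_R × Σ → ℝ⁴` is the same thing as a smooth map
`F : B²_R × (ℝ² ∖ ℤ²) → ℝ⁴` which is invariant under the deck transformation group
`ℤ²` acting on the second factor; `F` is a symplectic embedding iff moreover it pulls
the standard symplectic form of `ℝ⁴` back to the product of the standard area forms
and is injective modulo the `ℤ²`-action.
-/

open MeasureTheory Metric

noncomputable section

abbrev Pl := EuclideanSpace ℝ (Fin 2)
abbrev E4 := EuclideanSpace ℝ (Fin 4)

/-- The standard area form of `ℝ²`. -/
def area2 (a b : Pl) : ℝ := a 0 * b 1 - a 1 * b 0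

/-- The standard symplectic form `dp₁∧dq₁ + dp₂∧dq₂` of `ℝ⁴`,
with coordinates `(p₁,q₁,p₂,q₂)`. -/
def symp4 (u v : E4) : ℝ := u 0 * v 1 - u 1 * v 0 + (u 2 * v 3 - u 3 * v 2)

/-- A point of the lattice `ℤ² ⊂ ℝ²` (a lift of the puncture of `T² ∖ {pt}`). -/
def IsLatticePt (a : Pl) : Prop := ∀ i, ∃ z : ℤ, a i = (z : ℝ)

/-- The lifted domain: `B²_R × (ℝ² ∖ ℤ²)`, the universal-cover picture of
`B²_R × (T² ∖ {pt})`. -/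
def liftedDomain (R : ℝ) : Set (Pl × Pl) :=
  (ball (0 : Pl) R) ×ˢ {z : Pl | ¬ IsLatticePt z}


lemma par_hasFDerivAt {F : Type} [NormedAddCommGroup F] [NormedSpace ℝ F] [CompleteSpace F]
    (h : (ℝ × ℝ) × ℝ → F) (hh : ContDiff ℝ 1 h) (x : ℝ × ℝ) :
    HasFDerivAt (fun y : ℝ × ℝ => ∫ τ in (0:ℝ)..1, h (y, τ))
      (∫ τ in (0:ℝ)..1, (fderiv ℝ h (x, τ)).comp (ContinuousLinearMap.inl ℝ (ℝ × ℝ) ℝ)) x := by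
  have hc : Continuous h := hh.continuous
  have hd : Continuous (fderiv ℝ h) := hh.continuous_fderiv (by norm_num)
  have hd' : Continuous (fun q : (ℝ × ℝ) × ℝ =>
      (fderiv ℝ h q).comp (ContinuousLinearMap.inl ℝ (ℝ × ℝ) ℝ)) := by fun_prop
  have hcomp : IsCompact (closedBall x 1 ×ˢ Set.Icc (0:ℝ) 1) :=
    (isCompact_closedBall x 1).prod isCompact_Icc
  obtain ⟨C, hC⟩ := hcomp.exists_bound_of_continuousOn hd'.continuousOn
  refine intervalIntegral.hasFDerivAt_integral_of_dominated_of_fderiv_le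
    (F' := fun y τ => (fderiv ℝ h (y, τ)).comp (ContinuousLinearMap.inl ℝ (ℝ × ℝ) ℝ))
    (bound := fun _ => C) (ball_mem_nhds x one_pos) ?_ ?_ ?_ ?_ ?_ ?_
  · refine Filter.Eventually.of_forall fun y => ?_
    exact (hc.comp (by fun_prop : Continuous fun τ : ℝ => (y, τ))).aestronglyMeasurable
  · exact (hc.comp (by fun_prop : Continuous fun τ : ℝ => (x, τ))).intervalIntegrable _ _
  · exact (hd'.comp (by fun_prop : Continuous fun τ : ℝ => (x, τ))).aestronglyMeasurable
  · refine Filter.Eventually.of_forall fun τ hτ y hy => ?_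
    refine hC (y, τ) ⟨ball_subset_closedBall hy, ?_⟩
    rw [Set.uIoc_of_le zero_le_one] at hτ
    exact ⟨hτ.1.le, hτ.2⟩
  · simp
  · refine Filter.Eventually.of_forall fun τ hτ y hy => ?_
    have h1 : HasFDerivAt h (fderiv ℝ h (y, τ)) (y, τ) :=
      (hh.differentiable (by norm_num) _).hasFDerivAt
    exact h1.comp y (hasFDerivAt_prodMk_left y τ)

lemma par_contDiff (n : ℕ) : ∀ {F : Type} [NormedAddCommGroup F] [NormedSpace ℝ F] [CompleteSpace F]
    (h : (ℝ × ℝ) × ℝ → F) (_ : ContDiff ℝ n h),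
    ContDiff ℝ n (fun y : ℝ × ℝ => ∫ τ in (0:ℝ)..1, h (y, τ)) := by
  induction n with
  | zero =>
    intro F _ _ _ h hh
    have hc : Continuous h := hh.continuous
    refine contDiff_zero.2 ?_
    exact intervalIntegral.continuous_parametric_intervalIntegral_of_continuous' (by
      simpa [Function.uncurry_def] using hc) 0 1
  | succ n ih =>
    intro F _ _ _ h hh
    refine contDiff_succ_iff_hasFDerivAt.2 ⟨_, ?_, fun x => par_hasFDerivAt h (hh.of_le (by simp)) x⟩
    apply ih (fun q : (ℝ × ℝ) × ℝ =>
      (fderiv ℝ h q).comp (ContinuousLinearMap.inl ℝ (ℝ × ℝ) ℝ))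
    have := hh.fderiv_right (m := n) (by simp)
    exact this.clm_comp contDiff_const

lemma par_smooth {h : (ℝ × ℝ) × ℝ → ℝ} (hh : ContDiff ℝ (⊤ : ℕ∞) h) :
    ContDiff ℝ (⊤ : ℕ∞) (fun y : ℝ × ℝ => ∫ τ in (0:ℝ)..1, h (y, τ)) :=
  contDiff_infty.2 fun n => par_contDiff n h (contDiff_infty.1 hh n)


/-- Existence of a periodic bump `b` with antiderivative `B`. -/
lemma exists_bump : ∃ b B : ℝ → ℝ, ContDiff ℝ (⊤ : ℕ∞) b ∧ ContDiff ℝ (⊤ : ℕ∞) B ∧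
    (∀ x, HasDerivAt B (b x) x) ∧ (∀ x, 0 ≤ b x) ∧ (∀ (k : ℤ) (x : ℝ), b (x + k) = b x) ∧
    (∀ (k : ℤ) (x : ℝ), B (x + k) = B x + k) ∧ (∃ C, ∀ x, b x ≤ C) ∧
    (∀ (x : ℝ) (k : ℤ), |x - k - 1/2| ≤ 19/40 → b x = 0) ∧
    (∀ (x : ℝ) (k : ℤ), |x - k - 1/2| ≤ 19/40 → B x = k + 1/2) := by
  set c0 : ℝ := Real.cos (Real.pi / 20) with hc0
  set e : ℝ → ℝ := fun x => expNegInvGlue (Real.cos (2 * Real.pi * x) - c0) with he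
  have hpi := Real.pi_pos
  have he_smooth : ContDiff ℝ (⊤ : ℕ∞) e :=
    expNegInvGlue.contDiff.comp ((Real.contDiff_cos.comp (contDiff_const.mul contDiff_id)).sub contDiff_const)
  have he_c : Continuous e := he_smooth.continuous
  have he0 : ∀ x, 0 ≤ e x := fun x => expNegInvGlue.nonneg _
  have he1 : ∀ x, e (x + 1) = e x := by
    intro x
    simp only [he]
    rw [show 2 * Real.pi * (x + 1) = 2 * Real.pi * x + 2 * Real.pi by ring, Real.cos_add_two_pi]
  have hesymm : ∀ x, e (1 - x) = e x := by
    intro x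
    simp only [he]
    rw [show 2 * Real.pi * (1 - x) = 2 * Real.pi - 2 * Real.pi * x by ring, Real.cos_two_pi_sub]
  have hper : Function.Periodic e 1 := he1
  have hz0 : ∀ x, 1/40 ≤ x → x ≤ 1/2 → e x = 0 := by
    intro x h1 h2
    apply expNegInvGlue.zero_of_nonpos
    have : Real.cos (2 * Real.pi * x) ≤ Real.cos (Real.pi / 20) :=
      Real.cos_le_cos_of_nonneg_of_le_pi (by positivity) (by nlinarith) (by nlinarith)
    linarith
  have hz1 : ∀ x, 1/40 ≤ x → x ≤ 39/40 → e x = 0 := by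
    intro x h1 h2
    rcases le_total x (1/2) with h | h
    · exact hz0 x h1 h
    · rw [← hesymm]; exact hz0 _ (by linarith) (by linarith)
  have hz : ∀ (x : ℝ) (k : ℤ), |x - k - 1/2| ≤ 19/40 → e x = 0 := by
    intro x k h
    have h' := abs_le.1 h
    have : e (x - k * 1) = e x := hper.sub_int_mul_eq k
    rw [← this]
    exact hz1 _ (by linarith) (by linarith)
  have hii : ∀ a b, IntervalIntegrable e volume a b := fun a b => he_c.intervalIntegrable a b
  set M : ℝ := ∫ x in (0:ℝ)..1, e x with hM
  have hMpos : 0 < M := by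
    apply intervalIntegral.integral_pos zero_lt_one he_c.continuousOn (fun x _ => he0 x)
    refine ⟨0, by simp, ?_⟩
    apply expNegInvGlue.pos_of_pos
    have : Real.cos (Real.pi / 20) < Real.cos 0 :=
      Real.cos_lt_cos_of_nonneg_of_le_pi le_rfl (by linarith) (by positivity)
    simpa using this
  have hhalf : (∫ x in (0:ℝ)..(1/2), e x) = M / 2 := by
    have h1 : (∫ x in (0:ℝ)..(1/2), e (1 - x)) = ∫ x in (1 - 1/2:ℝ)..(1 - 0), e x :=
      intervalIntegral.integral_comp_sub_left _ _
    simp only [hesymm] at h1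
    have h2 := intervalIntegral.integral_add_adjacent_intervals (hii 0 (1/2)) (hii (1/2) 1)
    norm_num at h1 h2 ⊢
    linarith
  set B : ℝ → ℝ := fun x => (∫ y in (0:ℝ)..x, e y) / M with hB
  have hBd : ∀ x, HasDerivAt B (e x / M) x := by
    intro x
    exact (intervalIntegral.integral_hasDerivAt_right (hii 0 x)
      (he_c.stronglyMeasurableAtFilter _ _) he_c.continuousAt).div_const M
  have hBper : ∀ x, B (x + 1) = B x + 1 := by
    intro x
    have h2 := intervalIntegral.integral_add_adjacent_intervals (hii 0 x) (hii x (x+1))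
    have h3 : (∫ y in x..(x+1), e y) = M := by
      have := hper.intervalIntegral_add_eq x 0
      simpa using this
    simp only [hB]
    rw [← h2, h3]; field_simp
  have hBint : ∀ (k : ℤ) (x : ℝ), B (x + k) = B x + k := by
    intro k
    induction k using Int.induction_on with
    | zero => simp
    | succ i ih => intro x; push_cast; rw [← add_assoc, hBper]; push_cast at ih; rw [ih]; ring
    | pred i ih =>
      intro x
      have := hBper (x + (-i - 1))
      push_cast at ih ⊢
      rw [show x + (-(i:ℝ) - 1) + 1 = x + -i by ring, ih] at this
      linarith
  have hBz : ∀ x, 1/40 ≤ x → x ≤ 39/40 → B x = 1/2 := by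
    intro x h1 h2
    have h3 := intervalIntegral.integral_add_adjacent_intervals (hii 0 (1/2)) (hii (1/2) x)
    have h4 : (∫ y in (1/2:ℝ)..x, e y) = 0 := by
      rw [intervalIntegral.integral_congr (g := fun _ => (0:ℝ))]
      · simp
      · intro y hy
        rcases Set.mem_uIcc.1 hy with h | h
        · exact hz1 y (by linarith) (by linarith)
        · exact hz1 y (by linarith) (by linarith)
    simp only [hB]
    rw [← h3, h4, hhalf]; field_simp; norm_num
  refine ⟨fun x => e x / M, B, he_smooth.div_const M, ?_, hBd, fun x => div_nonneg (he0 x) hMpos.le,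
    fun k x => by
      have : e (x + k * 1) = e x := by simpa using (hper.int_mul k) x
      rw [mul_one] at this
      simp only [this], hBint, ?_, ?_, ?_⟩
  · refine contDiff_infty_iff_deriv.2 ⟨fun x => (hBd x).differentiableAt, ?_⟩
    have : deriv B = fun x => e x / M := funext fun x => (hBd x).deriv
    rw [this]
    exact he_smooth.div_const M
  · refine ⟨1 / M, fun x => ?_⟩
    refine div_le_div_of_nonneg_right ?_ hMpos.le
    simp only [he, expNegInvGlue]
    split_ifs with h
    · exact zero_le_one
    · exact Real.exp_le_one_iff.2 (by
        have := not_le.1 h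
        have := inv_pos.2 this
        linarith)
  · intro x k h
    simp [hz x k h]
  · intro x k h
    have h' := abs_le.1 h
    have := hBint k (x - k)
    rw [sub_add_cancel] at this
    rw [this, hBz _ (by linarith) (by linarith)]; ring


/-- area form on `ℝ × ℝ` -/
def W (u v : ℝ × ℝ) : ℝ := u.1 * v.2 - u.2 * v.1

/-- `f` is smooth at `z` and scales the area form by `c` there. -/
def Sc (f : ℝ × ℝ → ℝ × ℝ) (c : ℝ) (z : ℝ × ℝ) : Prop :=
  ContDiffAt ℝ (⊤ : ℕ∞) f z ∧ ∀ u v, W (fderiv ℝ f z u) (fderiv ℝ f z v) = c * W u v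

lemma top_ne_zero' : ((⊤ : ℕ∞) : WithTop ℕ∞) ≠ 0 := by simp

lemma Sc.comp {f g : ℝ × ℝ → ℝ × ℝ} {c d : ℝ} {z : ℝ × ℝ} (hg : Sc g d (f z)) (hf : Sc f c z) :
    Sc (fun z => g (f z)) (d * c) z := by
  refine ⟨ContDiffAt.comp z hg.1 hf.1, fun u v => ?_⟩
  have h : fderiv ℝ (fun z => g (f z)) z = (fderiv ℝ g (f z)).comp (fderiv ℝ f z) :=
    fderiv_comp z (hg.1.differentiableAt top_ne_zero') (hf.1.differentiableAt top_ne_zero')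
  rw [h]
  simp only [ContinuousLinearMap.comp_apply]
  rw [hg.2, hf.2]; ring

lemma Sc.congr {f g : ℝ × ℝ → ℝ × ℝ} {c : ℝ} {z : ℝ × ℝ} (hf : Sc f c z)
    (h : g =ᶠ[nhds z] f) : Sc g c z := by
  refine ⟨hf.1.congr_of_eventuallyEq h, fun u v => ?_⟩
  rw [h.fderiv_eq]; exact hf.2 u v

lemma Sc.mk' {f : ℝ × ℝ → ℝ × ℝ} {c : ℝ} {z : ℝ × ℝ} (hf : ContDiffAt ℝ (⊤ : ℕ∞) f z)
    {L1 L2 : ℝ × ℝ →L[ℝ] ℝ} (h1 : HasFDerivAt (fun z => (f z).1) L1 z)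
    (h2 : HasFDerivAt (fun z => (f z).2) L2 z)
    (hd : L1 (1, 0) * L2 (0, 1) - L1 (0, 1) * L2 (1, 0) = c) : Sc f c z := by
  refine ⟨hf, fun u v => ?_⟩
  have h : HasFDerivAt f (L1.prod L2) z := h1.prodMk h2
  rw [h.fderiv]
  have e1 : ∀ (L : ℝ × ℝ →L[ℝ] ℝ) (u : ℝ × ℝ), L u = u.1 * L (1, 0) + u.2 * L (0, 1) := by
    intro L u
    have : u = u.1 • ((1:ℝ), (0:ℝ)) + u.2 • ((0:ℝ), (1:ℝ)) := by ext <;> simp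
    conv_lhs => rw [this]
    rw [map_add, map_smul, map_smul]; simp
  simp only [W, ContinuousLinearMap.prod_apply]
  rw [e1 L1 u, e1 L1 v, e1 L2 u, e1 L2 v, ← hd]; ring

lemma exists_Gamma (b B : ℝ → ℝ) (hb : ContDiff ℝ (⊤ : ℕ∞) b) (hB : ContDiff ℝ (⊤ : ℕ∞) B)
    (hBd : ∀ x, HasDerivAt B (b x) x) (hb0 : ∀ x, 0 ≤ b x)
    (hbk : ∀ (k : ℤ) (x : ℝ), b (x + k) = b x) (hBk : ∀ (k : ℤ) (x : ℝ), B (x + k) = B x + k)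
    (hbz : ∀ (x : ℝ) (k : ℤ), |x - k - 1/2| ≤ 19/40 → b x = 0)
    (hBz : ∀ (x : ℝ) (k : ℤ), |x - k - 1/2| ≤ 19/40 → B x = k + 1/2)
    (η : ℝ) (h0 : 0 < η) (h1 : η ≤ 1) :
    ∃ Γ : ℝ × ℝ → ℝ × ℝ,
      (∀ (z : ℝ × ℝ) (m n : ℤ), Γ (z.1 + m, z.2 + n) = ((Γ z).1 + m, (Γ z).2 + n)) ∧
      (∀ z z', Γ z = Γ z' → z = z') ∧
      (∀ z : ℝ × ℝ, ((∃ k : ℤ, |z.1 - k - 1/2| < 9/20) ∨ (∃ k : ℤ, |z.2 - k - 1/2| < 9/20)) →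
        Sc Γ η z ∧ ((∃ k : ℤ, |(Γ z).1 - k - 1/2| ≤ η / 2) ∨
          (∃ k : ℤ, |(Γ z).2 - k - 1/2| ≤ 9/20))) := by
  set g : ℝ → ℝ := fun x => η * x + (1 - η) * B x with hg
  set g' : ℝ → ℝ := fun x => η + (1 - η) * b x with hg'
  have hgd : ∀ x, HasDerivAt g (g' x) x := by
    intro x
    have := ((hasDerivAt_id x).const_mul η).add ((hBd x).const_mul (1 - η))
    rw [mul_one] at this
    exact this
  have hgposA : ∀ x, η ≤ g' x := fun x => by
    have := mul_nonneg (sub_nonneg.2 h1) (hb0 x)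
    simp only [hg']; linarith
  have hgposB : ∀ x, 0 < g' x := fun x => lt_of_lt_of_le h0 (hgposA x)
  have hgmono : StrictMono g := strictMono_of_deriv_pos fun x => by
    rw [(hgd x).deriv]; exact hgposB x
  have hgs : ContDiff ℝ (⊤ : ℕ∞) g := by fun_prop
  have hgsB : ContDiff ℝ (⊤ : ℕ∞) g' := by fun_prop
  have hlam : ∀ x, 0 < η / g' x ∧ η / g' x ≤ 1 := fun x =>
    ⟨div_pos h0 (hgposB x), (div_le_one (hgposB x)).2 (hgposA x)⟩
  have hbd : ∀ (t l : ℝ), 0 < l → l ≤ 1 → |t - 1/2| ≤ 1/2 → 0 ≤ t → t < 1 →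
      0 ≤ 1/2 + (t - 1/2) * l ∧ 1/2 + (t - 1/2) * l < 1 := by
    intro t l h1 h2 h3 h4 h5
    constructor <;> nlinarith
  set Γ : ℝ × ℝ → ℝ × ℝ := fun z =>
    (g z.1, ⌊z.2⌋ + 1/2 + (z.2 - ⌊z.2⌋ - 1/2) * (η / g' z.1)) with hΓ
  refine ⟨Γ, ?_, ?_, ?_⟩
  · intro z m n
    simp only [hΓ, hg, hg', hbk, hBk, Int.floor_add_intCast]
    ext
    · simp; ring
    · simp; ring
  · intro z z' h
    have e1 : g z.1 = g z'.1 := congrArg Prod.fst h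
    have e2 := congrArg Prod.snd h
    have e3 : z.1 = z'.1 := hgmono.injective e1
    simp only [hΓ] at e2
    rw [← e3] at e2
    obtain ⟨l0, l1⟩ := hlam z.1
    set l := η / g' z.1
    have a1 := Int.floor_le z.2
    have a2 := Int.lt_floor_add_one z.2
    have a3 := Int.floor_le z'.2
    have a4 := Int.lt_floor_add_one z'.2
    have e4 : ⌊z.2⌋ = ⌊z'.2⌋ := by
      have q1 : ⌊(⌊z.2⌋ : ℝ) + 1/2 + (z.2 - ⌊z.2⌋ - 1/2) * l⌋ = ⌊z.2⌋ := by
        rw [Int.floor_eq_iff]; constructor <;> nlinarith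
      have q2 : ⌊(⌊z'.2⌋ : ℝ) + 1/2 + (z'.2 - ⌊z'.2⌋ - 1/2) * l⌋ = ⌊z'.2⌋ := by
        rw [Int.floor_eq_iff]; constructor <;> nlinarith
      rw [← q1, ← q2, e2]
    rw [e4] at e2
    have e5 : (z.2 - z'.2) * l = 0 := by linarith
    rcases mul_eq_zero.1 e5 with h | h
    · exact Prod.ext e3 (by linarith)
    · exact absurd h l0.ne'
  · rintro z (⟨k, hk⟩ | ⟨k, hk⟩)
    · -- vertical arm
      have hnear : ∀ᶠ w : ℝ × ℝ in nhds z, |w.1 - k - 1/2| < 9/20 := by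
        have : Continuous fun w : ℝ × ℝ => |w.1 - k - 1/2| := by fun_prop
        exact this.continuousAt.eventually_lt continuousAt_const hk
      have hcong : Γ =ᶠ[nhds z] fun w => (g w.1, w.2) := by
        filter_upwards [hnear] with w hw
        have : b w.1 = 0 := hbz _ k (by linarith)
        simp only [hΓ, hg', this, mul_zero, add_zero, div_self h0.ne']
        ext
        · simp
        · simp
      refine ⟨Sc.congr ?_ hcong, Or.inl ⟨k, ?_⟩⟩
      · have hgz : g' z.1 = η := by
          have : b z.1 = 0 := hbz _ k (by linarith)
          simp [hg', this]
        refine Sc.mk' (by fun_prop) (L1 := η • ContinuousLinearMap.fst ℝ ℝ ℝ)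
          (L2 := ContinuousLinearMap.snd ℝ ℝ ℝ) ?_ hasFDerivAt_snd ?_
        · have := (hgd z.1).comp_hasFDerivAt z (hasFDerivAt_fst (𝕜 := ℝ) (p := z))
          rw [hgz] at this
          exact this
        · simp
      · have hBB : B z.1 = k + 1/2 := hBz _ k (by linarith)
        have : (Γ z).1 - k - 1/2 = η * (z.1 - k - 1/2) := by
          simp only [hΓ, hg, hBB]; ring
        rw [this, abs_mul, abs_of_pos h0]
        nlinarith
    · -- horizontal arm
      have hnear : ∀ᶠ w : ℝ × ℝ in nhds z, |w.2 - k - 1/2| < 9/20 := by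
        have : Continuous fun w : ℝ × ℝ => |w.2 - k - 1/2| := by fun_prop
        exact this.continuousAt.eventually_lt continuousAt_const hk
      have hfl : ∀ w : ℝ × ℝ, |w.2 - k - 1/2| < 9/20 → ⌊w.2⌋ = k := by
        intro w hw
        rw [abs_lt] at hw
        rw [Int.floor_eq_iff]; constructor <;> linarith
      have hcong : Γ =ᶠ[nhds z] fun w => (g w.1, k + 1/2 + (w.2 - k - 1/2) * (η / g' w.1)) := by
        filter_upwards [hnear] with w hw
        simp only [hΓ, hfl w hw]
      refine ⟨Sc.congr ?_ hcong, Or.inr ⟨k, ?_⟩⟩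
      · have hsm : ContDiff ℝ (⊤ : ℕ∞) (fun w : ℝ × ℝ => η / g' w.1) :=
          contDiff_const.div (by fun_prop) (fun w => (hgposB w.1).ne')
        have hd2 := ((((hasFDerivAt_snd (𝕜 := ℝ) (p := z)).sub_const (k:ℝ)).sub_const (1/2 : ℝ)).mul
          ((hsm.differentiable top_ne_zero').differentiableAt (x := z)).hasFDerivAt).const_add ((k:ℝ) + 1/2)
        have hd1 := (hgd z.1).comp_hasFDerivAt z (hasFDerivAt_fst (𝕜 := ℝ) (p := z))
        refine Sc.mk' (by fun_prop) hd1 hd2 ?_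
        have hv : fderiv ℝ (fun w : ℝ × ℝ => η / g' w.1) z (0, 1) = 0 := by
          have hs1 : Differentiable ℝ (fun x => η / g' x) :=
            (contDiff_const.div hgsB (fun w => (hgposB w).ne')).differentiable top_ne_zero'
          have := ((hs1 z.1).hasDerivAt.comp_hasFDerivAt z (hasFDerivAt_fst (𝕜 := ℝ) (p := z))).fderiv
          have h3 : fderiv ℝ (fun w : ℝ × ℝ => η / g' w.1) z = _ := this
          rw [h3]; simp
        simp [hv]
        field_simp [(hgposB z.1).ne']
      · have : (Γ z).2 - k - 1/2 = (z.2 - k - 1/2) * (η / g' z.1) := by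
          simp only [hΓ, hfl z hk]; ring
        obtain ⟨l0, l1⟩ := hlam z.1
        rw [this, abs_mul, abs_of_pos l0]
        nlinarith [abs_nonneg (z.2 - k - 1/2)]

/-- derivative of `expNegInvGlue` -/
noncomputable def dE (x : ℝ) : ℝ := x⁻¹ ^ 2 * expNegInvGlue x

lemma hasDerivAt_E (x : ℝ) : HasDerivAt expNegInvGlue (dE x) x := by
  have := expNegInvGlue.hasDerivAt_polynomial_eval_inv_mul (1 : Polynomial ℝ) x
  simpa [dE] using this

lemma dE_smooth : ContDiff ℝ (⊤ : ℕ∞) dE := by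
  have h : deriv expNegInvGlue = dE := funext fun x => (hasDerivAt_E x).deriv
  rw [← h]
  exact (contDiff_infty_iff_deriv.1 (expNegInvGlue.contDiff (n := ⊤))).2

lemma dE_nonneg (x : ℝ) : 0 ≤ dE x := mul_nonneg (sq_nonneg _) (expNegInvGlue.nonneg x)

lemma dE_zero {x : ℝ} (hx : x ≤ 0) : dE x = 0 := by
  simp [dE, expNegInvGlue.zero_of_nonpos hx]

lemma dE_lt_one (x : ℝ) : dE x < 1 := by
  rcases le_or_gt x 0 with h | h
  · rw [dE_zero h]; exact zero_lt_one
  · simp only [dE, expNegInvGlue, if_neg (not_le.2 h)]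
    set y := x⁻¹ with hy
    have hy0 : 0 < y := inv_pos.2 h
    have h1 : y < Real.exp (y / 2) := by
      have h2 := Real.add_one_le_exp (y / 2 - 1)
      have h3 : Real.exp (y / 2) = Real.exp 1 * Real.exp (y / 2 - 1) := by
        rw [← Real.exp_add]; congr 1; ring
      have h4 := Real.exp_one_gt_d9
      rw [h3]
      nlinarith
    have h5 : Real.exp y = Real.exp (y/2) ^ 2 := by
      rw [← Real.exp_nat_mul]; congr 1; push_cast; ring
    rw [Real.exp_neg, ← div_eq_mul_inv, div_lt_one (Real.exp_pos _), h5]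
    exact pow_lt_pow_left₀ h1 hy0.le two_ne_zero

noncomputable def PP (u : ℝ) : ℝ := u + expNegInvGlue (1/5 - u)

lemma PP_deriv (u : ℝ) : HasDerivAt PP (1 - dE (1/5 - u)) u := by
  have h := (hasDerivAt_E (1/5 - u)).comp u ((hasDerivAt_id u).const_sub (1/5))
  have := (hasDerivAt_id u).add h
  rw [mul_neg, mul_one, ← sub_eq_add_neg] at this
  exact this

lemma PP_smooth : ContDiff ℝ (⊤ : ℕ∞) PP :=
  contDiff_id.add (expNegInvGlue.contDiff.comp (contDiff_const.sub contDiff_id))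

lemma PP_mono : StrictMono PP := strictMono_of_deriv_pos fun u => by
  rw [(PP_deriv u).deriv]; linarith [dE_lt_one (1/5 - u)]

lemma PP_eq {u : ℝ} (hu : 1/5 ≤ u) : PP u = u := by
  simp only [PP]; rw [expNegInvGlue.zero_of_nonpos (by linarith), add_zero]

lemma PP_zero : 1/200 < PP 0 := by
  have h : PP 0 = Real.exp (-5) := by
    simp only [PP, expNegInvGlue]; norm_num
  rw [h, Real.exp_neg, one_div]
  apply inv_strictAnti₀ (Real.exp_pos _)
  have h1 := Real.exp_one_lt_d9
  have h5 : Real.exp 5 = Real.exp 1 ^ 5 := by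
    rw [← Real.exp_nat_mul]; congr 1; norm_num
  rw [h5]
  calc Real.exp 1 ^ 5 < 2.7182818286 ^ 5 := pow_lt_pow_left₀ h1 (Real.exp_pos _).le (by norm_num)
    _ < 200 := by norm_num

lemma PP_pos {u : ℝ} (hu : 0 ≤ u) : 1/200 < PP u :=
  lt_of_lt_of_le PP_zero (PP_mono.monotone hu)

noncomputable def kk (u : ℝ) : ℝ := √(PP u / u)

lemma kk_pos {u : ℝ} (hu : 0 < u) : 0 < kk u :=
  Real.sqrt_pos.2 (div_pos (by linarith [PP_pos hu.le]) hu)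

lemma kk_sq {u : ℝ} (hu : 0 < u) : kk u ^ 2 * u = PP u := by
  rw [kk, Real.sq_sqrt (div_pos (by linarith [PP_pos hu.le]) hu).le]; field_simp

lemma kk_one {u : ℝ} (hu : 1/5 ≤ u) : kk u = 1 := by
  have : u ≠ 0 := by linarith
  rw [kk, PP_eq hu, div_self this, Real.sqrt_one]

lemma kk_smooth {u : ℝ} (hu : 0 < u) : ContDiffAt ℝ (⊤ : ℕ∞) kk u :=
  ContDiffAt.sqrt (PP_smooth.contDiffAt.div contDiffAt_id hu.ne')
    (div_pos (by linarith [PP_pos hu.le]) hu).ne'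

lemma kk_deriv {u : ℝ} (hu : 0 < u) :
    kk u ^ 2 + 2 * kk u * deriv kk u * u = 1 - dE (1/5 - u) := by
  have h1 : HasDerivAt kk (deriv kk u) u :=
    ((kk_smooth hu).differentiableAt top_ne_zero').hasDerivAt
  have h2 := (h1.pow 2).mul (hasDerivAt_id u)
  have h3 : (fun x => kk x ^ 2 * x) =ᶠ[nhds u] PP := by
    filter_upwards [lt_mem_nhds hu] with x hx using kk_sq hx
  have h4 := (PP_deriv u).congr_of_eventuallyEq h3
  have h5 := h4.unique h2
  rw [h5]; simp; ring

/-- radial map -/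
noncomputable def rad (v : ℝ × ℝ) : ℝ × ℝ := (kk (v.1 ^ 2 + v.2 ^ 2) * v.1, kk (v.1 ^ 2 + v.2 ^ 2) * v.2)

lemma rad_Sc (v : ℝ × ℝ) (hv : 0 < v.1 ^ 2 + v.2 ^ 2) :
    Sc rad (1 - dE (1/5 - (v.1 ^ 2 + v.2 ^ 2))) v := by
  have hk : ContDiffAt ℝ (⊤ : ℕ∞) (fun v : ℝ × ℝ => kk (v.1 ^ 2 + v.2 ^ 2)) v :=
    ContDiffAt.comp v (g := kk) (f := fun v : ℝ × ℝ => v.1 ^ 2 + v.2 ^ 2) (kk_smooth hv) (by fun_prop)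
  have hd1 : HasDerivAt kk (deriv kk (v.1 ^ 2 + v.2 ^ 2)) (v.1 ^ 2 + v.2 ^ 2) :=
    ((kk_smooth hv).differentiableAt top_ne_zero').hasDerivAt
  have hf1 := hasFDerivAt_fst (𝕜 := ℝ) (p := v)
  have hf2 := hasFDerivAt_snd (𝕜 := ℝ) (p := v)
  have hN := (hf1.pow 2).add (hf2.pow 2)
  have hk' := hd1.comp_hasFDerivAt v hN
  have hc : ContDiffAt ℝ (⊤ : ℕ∞) rad v :=
    (hk.mul contDiffAt_fst).prodMk (hk.mul contDiffAt_snd)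
  refine Sc.mk' hc (hk'.mul hf1) (hk'.mul hf2) ?_
  rw [← kk_deriv hv]
  simp
  ring

lemma rad_shift (z c : ℝ × ℝ) (h : 0 < (z.1 - c.1) ^ 2 + (z.2 - c.2) ^ 2) :
    Sc (fun w => c + rad (w - c)) (1 - dE (1/5 - ((z.1 - c.1) ^ 2 + (z.2 - c.2) ^ 2))) z := by
  have hsub : Sc (fun w : ℝ × ℝ => w - c) 1 z := by
    refine ⟨by fun_prop, fun u v => ?_⟩
    rw [fderiv_sub_const]; simp
  have h3 := Sc.comp (f := fun w : ℝ × ℝ => w - c) (rad_Sc (z - c) h) hsub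
  rw [mul_one] at h3
  refine ⟨contDiffAt_const.add h3.1, fun u v => ?_⟩
  rw [fderiv_const_add]; exact h3.2 u v

/-- squared distance to the lattice -/
noncomputable def NN (w : ℝ × ℝ) : ℝ := (w.1 - round w.1) ^ 2 + (w.2 - round w.2) ^ 2

lemma abs_sub_round_lip (x y : ℝ) : |x - round x| - |x - y| ≤ |y - round y| := by
  have h1 := round_le x (round y)
  have h2 := abs_add_le (x - y) (y - round y)
  rw [show x - y + (y - round y) = x - round y by ring] at h2
  linarith

lemma round_eventually {x : ℝ} (hx : |x - round x| < 1/2) : ∀ᶠ y in nhds x, round y = round x := by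
  have hc : Continuous fun y : ℝ => |y - round x| := by fun_prop
  filter_upwards [hc.continuousAt.eventually_lt continuousAt_const hx] with y hy
  rw [abs_lt] at hy
  rw [round_eq_iff]; constructor <;> linarith

lemma cell (w : ℝ × ℝ) : (∀ᶠ w' in nhds w, round w'.1 = round w.1 ∧ round w'.2 = round w.2) ∨
    (∀ᶠ w' in nhds w, 1/5 ≤ NN w') := by
  by_cases h : |w.1 - round w.1| < 1/2 ∧ |w.2 - round w.2| < 1/2
  · left
    exact (continuousAt_fst.eventually (round_eventually h.1)).and
      (continuousAt_snd.eventually (round_eventually h.2))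
  · right
    have hc1 : Continuous fun y : ℝ × ℝ => |w.1 - y.1| := by fun_prop
    have hc2 : Continuous fun y : ℝ × ℝ => |w.2 - y.2| := by fun_prop
    have hl : ∀ x y : ℝ, 1/2 ≤ |x - round x| → |x - y| < 1/40 → 1/5 ≤ (y - round y) ^ 2 := by
      intro x y h1 h2
      have := abs_sub_round_lip x y
      rw [← sq_abs]
      nlinarith
    by_cases h1 : |w.1 - round w.1| < 1/2
    · have h2 : 1/2 ≤ |w.2 - round w.2| := not_lt.1 fun h2 => h ⟨h1, h2⟩
      filter_upwards [hc2.continuousAt.eventually_lt (continuousAt_const (y := (1/40:ℝ))) (by simp)]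
        with y hy
      have := hl _ _ h2 hy
      simp only [NN]; nlinarith [sq_nonneg (y.1 - round y.1)]
    · filter_upwards [hc1.continuousAt.eventually_lt (continuousAt_const (y := (1/40:ℝ))) (by simp)]
        with y hy
      have := hl _ _ (not_lt.1 h1) hy
      simp only [NN]; nlinarith [sq_nonneg (y.2 - round y.2)]

lemma arm_of {x : ℝ} {n : ℤ} (h1 : |x - n| ≤ 1/2) (h2 : 1/400 < (x - n) ^ 2) :
    ∃ k : ℤ, |x - k - 1/2| < 9/20 := by
  rw [abs_le] at h1
  rcases le_total 0 (x - n) with h | h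
  · refine ⟨n, ?_⟩
    rw [abs_lt]; constructor <;> nlinarith
  · refine ⟨n - 1, ?_⟩
    push_cast
    rw [abs_lt]; constructor <;> nlinarith

set_option maxHeartbeats 1000000 in
lemma exists_Phi : ∃ (Φ : ℝ × ℝ → ℝ × ℝ) (J : ℝ × ℝ → ℝ),
    (∀ (z : ℝ × ℝ) (m n : ℤ), Φ (z.1 + m, z.2 + n) = ((Φ z).1 + m, (Φ z).2 + n)) ∧
    (∀ (z : ℝ × ℝ) (m n : ℤ), J (z.1 + m, z.2 + n) = J z) ∧
    ContDiff ℝ (⊤ : ℕ∞) J ∧ (∀ z, 0 < J z) ∧ (∀ z, J z ≤ 1) ∧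
    (∀ z : ℝ × ℝ, (¬ ∃ m n : ℤ, z = ((m : ℝ), (n : ℝ))) → Sc Φ (J z) z ∧
      ((∃ k : ℤ, |(Φ z).1 - k - 1/2| < 9/20) ∨ (∃ k : ℤ, |(Φ z).2 - k - 1/2| < 9/20))) ∧
    (∀ z z' : ℝ × ℝ, (¬ ∃ m n : ℤ, z = ((m : ℝ), (n : ℝ))) →
      (¬ ∃ m n : ℤ, z' = ((m : ℝ), (n : ℝ))) → Φ z = Φ z' → z = z') := by
  set Φ : ℝ × ℝ → ℝ × ℝ := fun w =>
    (round w.1 + kk (NN w) * (w.1 - round w.1), round w.2 + kk (NN w) * (w.2 - round w.2)) with hΦ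
  set J : ℝ × ℝ → ℝ := fun w => 1 - dE (1/5 - NN w) with hJ
  have hNNper : ∀ (z : ℝ × ℝ) (m n : ℤ), NN (z.1 + m, z.2 + n) = NN z := by
    intro z m n
    simp only [NN, round_add_intCast]; push_cast; ring
  have hNNnn : ∀ w, 0 ≤ NN w := fun w => by simp only [NN]; positivity
  have hNpos : ∀ z : ℝ × ℝ, (¬ ∃ m n : ℤ, z = ((m : ℝ), (n : ℝ))) → 0 < NN z := by
    intro z hz
    refine lt_of_le_of_ne (hNNnn z) fun h => hz ⟨round z.1, round z.2, ?_⟩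
    simp only [NN] at h
    have h1 : z.1 - round z.1 = 0 := by nlinarith [sq_nonneg (z.1 - round z.1), sq_nonneg (z.2 - round z.2)]
    have h2 : z.2 - round z.2 = 0 := by nlinarith [sq_nonneg (z.1 - round z.1), sq_nonneg (z.2 - round z.2)]
    ext
    · simp; linarith
    · simp; linarith
  have hnorm : ∀ z, 0 < NN z → (kk (NN z) * (z.1 - round z.1)) ^ 2 + (kk (NN z) * (z.2 - round z.2)) ^ 2
      = PP (NN z) := by
    intro z hz
    rw [← kk_sq hz]
    conv_rhs => rw [show NN z = (z.1 - round z.1) ^ 2 + (z.2 - round z.2) ^ 2 from rfl]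
    simp only [NN]
    ring
  have hsmall : ∀ z, 0 < NN z → NN z < 1/5 → |kk (NN z) * (z.1 - round z.1)| < 1/2 ∧
      |kk (NN z) * (z.2 - round z.2)| < 1/2 := by
    intro z hz hz'
    have h1 := hnorm z hz
    have h2 : PP (NN z) < 1/5 := by
      have := PP_mono hz'
      rwa [PP_eq le_rfl] at this
    constructor
    · apply abs_lt_of_sq_lt_sq _ (by norm_num)
      nlinarith [sq_nonneg (kk (NN z) * (z.2 - round z.2))]
    · apply abs_lt_of_sq_lt_sq _ (by norm_num)
      nlinarith [sq_nonneg (kk (NN z) * (z.1 - round z.1))]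
  have hid : ∀ z, 1/5 ≤ NN z → Φ z = z := by
    intro z hz
    simp only [hΦ, kk_one hz]
    ext <;> simp
  refine ⟨Φ, J, ?_, ?_, ?_, ?_, ?_, ?_, ?_⟩
  · intro z m n
    simp only [hΦ, hNNper, round_add_intCast]
    ext
    · push_cast; ring
    · push_cast; ring
  · intro z m n
    simp only [hJ, hNNper]
  · rw [contDiff_iff_contDiffAt]
    intro w
    rcases cell w with h | h
    · have : J =ᶠ[nhds w] fun w' => 1 - dE (1/5 - ((w'.1 - round w.1) ^ 2 + (w'.2 - round w.2) ^ 2)) := by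
        filter_upwards [h] with w' hw'
        simp only [hJ, NN, hw'.1, hw'.2]
      refine ContDiffAt.congr_of_eventuallyEq ?_ this
      exact contDiffAt_const.sub (dE_smooth.contDiffAt.comp w (by fun_prop))
    · have : J =ᶠ[nhds w] fun w' => 1 := by
        filter_upwards [h] with w' hw'
        simp only [hJ, dE_zero (show 1/5 - NN w' ≤ 0 by linarith), sub_zero]
      exact contDiffAt_const.congr_of_eventuallyEq this
  · intro z
    simp only [hJ]; linarith [dE_lt_one (1/5 - NN z)]
  · intro z
    simp only [hJ]; linarith [dE_nonneg (1/5 - NN z)]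
  · intro z hz
    have hz0 := hNpos z hz
    refine ⟨?_, ?_⟩
    · rcases cell z with h | h
      · have hc : Φ =ᶠ[nhds z] fun w => ((round z.1 : ℝ), (round z.2 : ℝ)) +
            rad (w - ((round z.1 : ℝ), (round z.2 : ℝ))) := by
          filter_upwards [h] with w hw
          simp only [hΦ, rad, NN, hw.1, hw.2]
          ext <;> simp
        have hJz : J z = 1 - dE (1/5 - ((z.1 - (round z.1 : ℝ)) ^ 2 + (z.2 - (round z.2 : ℝ)) ^ 2)) := by
          simp only [hJ, NN]
        have hz1 : 0 < (z.1 - (round z.1 : ℝ)) ^ 2 + (z.2 - (round z.2 : ℝ)) ^ 2 := by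
          simpa only [NN] using hz0
        have h3 := rad_shift z ((round z.1 : ℝ), (round z.2 : ℝ)) hz1
        rw [hJz]
        exact Sc.congr h3 hc
      · have hc : Φ =ᶠ[nhds z] fun w => w := by
          filter_upwards [h] with w hw using hid w hw
        have hz5 : 1/5 ≤ NN z := h.self_of_nhds
        have : J z = 1 := by simp only [hJ, dE_zero (show 1/5 - NN z ≤ 0 by linarith), sub_zero]
        rw [this]
        refine Sc.congr ⟨contDiffAt_id, fun u v => ?_⟩ hc
        simp
    · have h1 := hnorm z hz0
      have h2 := PP_pos hz0.le
      have hle : |kk (NN z) * (z.1 - round z.1)| ≤ 1/2 ∧ |kk (NN z) * (z.2 - round z.2)| ≤ 1/2 := by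
        rcases lt_or_ge (NN z) (1/5) with h | h
        · exact ⟨(hsmall z hz0 h).1.le, (hsmall z hz0 h).2.le⟩
        · rw [kk_one h, one_mul, one_mul]
          exact ⟨abs_sub_round _, abs_sub_round _⟩
      by_cases h3 : 1/400 < (kk (NN z) * (z.1 - round z.1)) ^ 2
      · left
        refine arm_of (n := round z.1) ?_ ?_
        · simpa [hΦ] using hle.1
        · simpa [hΦ] using h3
      · right
        refine arm_of (n := round z.2) ?_ ?_
        · simpa [hΦ] using hle.2
        · have : 1/400 < (kk (NN z) * (z.2 - round z.2)) ^ 2 := by linarith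
          simpa [hΦ] using this
  · intro z z' hz hz' h
    have hz0 := hNpos z hz
    have hz0' := hNpos z' hz'
    have hr : ∀ z, 0 < NN z → round (Φ z).1 = round z.1 ∧ round (Φ z).2 = round z.2 := by
      intro z hz
      rcases lt_or_ge (NN z) (1/5) with h | h
      · have h1 := abs_lt.1 (hsmall z hz h).1
        have h2 := abs_lt.1 (hsmall z hz h).2
        simp only [hΦ, round_eq_iff]
        refine ⟨⟨?_, ?_⟩, ⟨?_, ?_⟩⟩ <;> linarith
      · rw [hid z h]; exact ⟨rfl, rfl⟩
    have r1 : round z.1 = round z'.1 := by rw [← (hr z hz0).1, ← (hr z' hz0').1, h]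
    have r2 : round z.2 = round z'.2 := by rw [← (hr z hz0).2, ← (hr z' hz0').2, h]
    have e1 : kk (NN z) * (z.1 - round z.1) = kk (NN z') * (z'.1 - round z'.1) := by
      have := congrArg Prod.fst h
      simp only [hΦ, r1] at this ⊢
      linarith
    have e2 : kk (NN z) * (z.2 - round z.2) = kk (NN z') * (z'.2 - round z'.2) := by
      have := congrArg Prod.snd h
      simp only [hΦ, r2] at this ⊢
      linarith
    have hN : NN z = NN z' := by
      apply PP_mono.injective
      rw [← hnorm z hz0, ← hnorm z' hz0', e1, e2]
    rw [← hN, r1] at e1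
    rw [← hN, r2] at e2
    have hk := (kk_pos hz0).ne'
    have e1' := mul_left_cancel₀ hk e1
    have e2' := mul_left_cancel₀ hk e2
    exact Prod.ext (by linarith) (by linarith)

lemma Sc_inv {Ψ Θ : ℝ × ℝ → ℝ × ℝ} (h : ∀ z, Ψ (Θ z) = z) (hinj : Function.Injective Ψ)
    {c : ℝ} (hc : c ≠ 0) {z : ℝ × ℝ} (hS : Sc Ψ c (Θ z)) : Sc Θ c⁻¹ z := by
  set w := Θ z with hw
  have hi : Function.Injective (fderiv ℝ Ψ w : ℝ × ℝ →ₗ[ℝ] ℝ × ℝ) := by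
    rw [← LinearMap.ker_eq_bot, LinearMap.ker_eq_bot']
    intro u hu
    have hu' : fderiv ℝ Ψ w u = 0 := hu
    have h1 := hS.2 u (1, 0)
    have h2 := hS.2 u (0, 1)
    rw [hu'] at h1 h2
    simp [W, hc] at h1 h2
    exact Prod.ext h2 h1
  set e : (ℝ × ℝ) ≃L[ℝ] (ℝ × ℝ) := (LinearEquiv.ofInjectiveEndo _ hi).toContinuousLinearEquiv with he
  have hfd : HasFDerivAt Ψ (e : ℝ × ℝ →L[ℝ] ℝ × ℝ) w := by
    have h1 := (hS.1.differentiableAt top_ne_zero').hasFDerivAt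
    have h2 : (e : ℝ × ℝ →L[ℝ] ℝ × ℝ) = fderiv ℝ Ψ w := ContinuousLinearMap.ext fun u => rfl
    rw [h2]; exact h1
  have hloc := hS.1.to_localInverse hfd top_ne_zero'
  have hst := hS.1.hasStrictFDerivAt' hfd top_ne_zero'
  have hev := hst.eventually_right_inverse
  have hz : Ψ w = z := h z
  have hcd : ContDiffAt ℝ (⊤ : ℕ∞) Θ z := by
    rw [hz] at hloc hev
    refine hloc.congr_of_eventuallyEq ?_
    filter_upwards [hev] with y hy
    apply hinj
    rw [h y]; exact hy.symm
  refine ⟨hcd, fun u v => ?_⟩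
  have hcomp : HasFDerivAt (fun y => Ψ (Θ y)) ((fderiv ℝ Ψ w).comp (fderiv ℝ Θ z)) z :=
    HasFDerivAt.comp z (hS.1.differentiableAt top_ne_zero').hasFDerivAt
      (hcd.differentiableAt top_ne_zero').hasFDerivAt
  have hid : (fderiv ℝ Ψ w).comp (fderiv ℝ Θ z) = ContinuousLinearMap.id ℝ (ℝ × ℝ) := by
    refine hcomp.unique ?_
    have : (fun y => Ψ (Θ y)) = fun y => y := funext h
    rw [this]; exact hasFDerivAt_id z
  have hu := fun u => congrArg (fun L : ℝ × ℝ →L[ℝ] ℝ × ℝ => L u) hid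
  simp at hu
  have h3 := hS.2 (fderiv ℝ Θ z u) (fderiv ℝ Θ z v)
  have hu1 := hu u.1 u.2
  have hv1 := hu v.1 v.2
  simp only [Prod.mk.eta] at hu1 hv1
  rw [hu1, hv1] at h3
  rw [h3]; field_simp

lemma surj_of_equi {f : ℝ → ℝ} (hf : Continuous f) (_hm : StrictMono f)
    (hk : ∀ (x : ℝ) (n : ℤ), f (x + n) = f x + n) : Function.Surjective f := by
  intro y
  refine mem_range_of_exists_le_of_exists_ge hf ⟨(⌊y - f 0⌋ : ℝ), ?_⟩ ⟨(⌈y - f 0⌉ : ℝ), ?_⟩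
  · have := hk 0 ⌊y - f 0⌋
    rw [zero_add] at this
    linarith [Int.floor_le (y - f 0)]
  · have := hk 0 ⌈y - f 0⌉
    rw [zero_add] at this
    linarith [Int.le_ceil (y - f 0)]

lemma prim_periodic {f : ℝ → ℝ} (hf : Continuous f) (hp : Function.Periodic f 1) (x : ℝ) (n : ℤ) :
    ∫ t in (0:ℝ)..(x + n), f t = (∫ t in (0:ℝ)..x, f t) + n * ∫ t in (0:ℝ)..1, f t := by
  have h1 := hp.intervalIntegral_add_zsmul_eq n x (fun a b => hf.intervalIntegrable a b)
  have h2 := hp.intervalIntegral_add_eq x 0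
  simp at h1 h2
  rw [h2] at h1
  rw [← h1, intervalIntegral.integral_add_adjacent_intervals (hf.intervalIntegrable _ _)
    (hf.intervalIntegrable _ _)]

lemma exists_Theta (J : ℝ × ℝ → ℝ) (hJk : ∀ (z : ℝ × ℝ) (m n : ℤ), J (z.1 + m, z.2 + n) = J z)
    (hJ : ContDiff ℝ (⊤ : ℕ∞) J) (h0 : ∀ z, 0 < J z) (h1 : ∀ z, J z ≤ 1) :
    ∃ (Θ : ℝ × ℝ → ℝ × ℝ) (m0 : ℝ), 0 < m0 ∧ m0 ≤ 1 ∧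
    (∀ (z : ℝ × ℝ) (m n : ℤ), Θ (z.1 + m, z.2 + n) = ((Θ z).1 + m, (Θ z).2 + n)) ∧
    Function.Injective Θ ∧ (∀ z, Sc Θ (m0 / J (Θ z)) z) ∧
    (∀ (z : ℝ × ℝ) (m n : ℤ), Θ z = ((m : ℝ), (n : ℝ)) → z = ((m : ℝ), (n : ℝ))) := by
  have hJc : ∀ s, Continuous fun t => J (s, t) := fun s => hJ.continuous.comp (by fun_prop)
  set K : ℝ × ℝ → ℝ := fun y => y.2 * ∫ σ in (0:ℝ)..1, J (y.1, y.2 * σ) with hK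
  have hKs : ContDiff ℝ (⊤ : ℕ∞) K := by
    have := par_smooth (h := fun x => J (x.1.1, x.1.2 * x.2)) (hJ.comp (by fun_prop))
    exact contDiff_snd.mul this
  have hKi : ∀ s t, K (s, t) = ∫ τ in (0:ℝ)..t, J (s, τ) := by
    intro s t
    simp only [hK]
    rw [intervalIntegral.mul_integral_comp_mul_left (f := fun τ => J (s, τ))]
    simp
  have hJp : ∀ s, Function.Periodic (fun t => J (s, t)) 1 := by
    intro s t
    have := hJk (s, t) 0 1
    simpa using this
  have hKt : ∀ s t, HasDerivAt (fun t => K (s, t)) (J (s, t)) t := by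
    intro s t
    have : (fun t => K (s, t)) = fun t => ∫ τ in (0:ℝ)..t, J (s, τ) := funext (hKi s)
    rw [this]
    exact ((hJc s).integral_hasStrictDerivAt 0 t).hasDerivAt
  set k : ℝ → ℝ := fun s => K (s, 1) with hk
  have hks : ContDiff ℝ (⊤ : ℕ∞) k := hKs.comp (by fun_prop)
  have hkpos : ∀ s, 0 < k s := by
    intro s
    simp only [hk, hKi]
    exact intervalIntegral.intervalIntegral_pos_of_pos ((hJc s).intervalIntegrable _ _)
      (fun x => h0 _) one_pos
  have hkle : ∀ s, k s ≤ 1 := by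
    intro s
    simp only [hk, hKi]
    have := intervalIntegral.integral_mono_on (μ := volume) zero_le_one ((hJc s).intervalIntegrable 0 1)
      (continuous_const (y := (1:ℝ))|>.intervalIntegrable 0 1) (fun x _ => h1 (s, x))
    simpa using this
  have hKper : ∀ s t (m : ℤ), K (s + m, t) = K (s, t) := by
    intro s t m
    rw [hKi, hKi]
    congr 1; ext τ
    have := hJk (s, τ) m 0
    simpa using this
  have hKn : ∀ s t (n : ℤ), K (s, t + n) = K (s, t) + n * k s := by
    intro s t n
    simp only [hk]
    rw [hKi, hKi, hKi]
    exact prim_periodic (hJc s) (hJp s) t n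
  have hkp : Function.Periodic k 1 := by
    intro s
    have := hKper s 1 1
    simpa using this
  set m0 : ℝ := ∫ s in (0:ℝ)..1, k s with hm0
  have hm0pos : 0 < m0 := intervalIntegral.intervalIntegral_pos_of_pos
    (hks.continuous.intervalIntegrable _ _) hkpos one_pos
  have hm0le : m0 ≤ 1 := by
    have := intervalIntegral.integral_mono_on (μ := volume) zero_le_one (hks.continuous.intervalIntegrable 0 1)
      (continuous_const (y := (1:ℝ))|>.intervalIntegrable 0 1) (fun x _ => hkle x)
    simpa using this
  set A : ℝ → ℝ := fun s => m0⁻¹ * ∫ σ in (0:ℝ)..s, k σ with hA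
  have hAd : ∀ s, HasDerivAt A (m0⁻¹ * k s) s := fun s =>
    ((hks.continuous.integral_hasStrictDerivAt 0 s).hasDerivAt).const_mul _
  have hAs : ContDiff ℝ (⊤ : ℕ∞) A := by
    rw [contDiff_infty_iff_deriv]
    refine ⟨fun s => (hAd s).differentiableAt, ?_⟩
    have : deriv A = fun s => m0⁻¹ * k s := funext fun s => (hAd s).deriv
    rw [this]; exact contDiff_const.mul hks
  have hAm : StrictMono A := strictMono_of_deriv_pos fun s => by
    rw [(hAd s).deriv]; exact mul_pos (inv_pos.2 hm0pos) (hkpos s)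
  have hAn : ∀ s (n : ℤ), A (s + n) = A s + n := by
    intro s n
    simp only [hA]
    rw [prim_periodic hks.continuous hkp s n, ← hm0]
    field_simp
  have hA0 : A 0 = 0 := by simp [hA]
  have hBm : ∀ s, StrictMono fun t => K (s, t) / k s := fun s => strictMono_of_deriv_pos fun t => by
    rw [((hKt s t).div_const _).deriv]; exact div_pos (h0 _) (hkpos s)
  have hBn : ∀ s t (n : ℤ), K (s, t + n) / k s = K (s, t) / k s + n := by
    intro s t n
    rw [hKn]
    have := (hkpos s).ne'
    field_simp
  have hB0 : ∀ s, K (s, 0) / k s = 0 := by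
    intro s; simp [hK]
  have hBc : ∀ s, Continuous fun t => K (s, t) / k s := fun s =>
    (hKs.continuous.comp (by fun_prop)).div_const _
  set Ψ : ℝ × ℝ → ℝ × ℝ := fun w => (A w.1, K w / k w.1) with hΨ
  have hinj : Function.Injective Ψ := by
    rintro ⟨s, t⟩ ⟨s', t'⟩ h
    have e1 : s = s' := hAm.injective (congrArg Prod.fst h)
    subst e1
    have e2 : t = t' := (hBm s).injective (congrArg Prod.snd h)
    rw [e2]
  have hsurj : Function.Surjective Ψ := by
    rintro ⟨x, y⟩
    obtain ⟨s, hs⟩ := surj_of_equi hAs.continuous hAm hAn x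
    obtain ⟨t, ht⟩ := surj_of_equi (hBc s) (hBm s) (hBn s) y
    exact ⟨(s, t), Prod.ext hs ht⟩
  have hΨn : ∀ (z : ℝ × ℝ) (m n : ℤ), Ψ (z.1 + m, z.2 + n) = ((Ψ z).1 + m, (Ψ z).2 + n) := by
    rintro ⟨s, t⟩ m n
    have hkm : k (s + m) = k s := hKper s 1 m
    simp only [hΨ, hAn, hkm, hKper, hBn]
  have hΨS : ∀ z, Sc Ψ (J z / m0) z := by
    rintro ⟨s, t⟩
    have hd : ContDiffAt ℝ (⊤ : ℕ∞) (fun w : ℝ × ℝ => K w / k w.1) (s, t) :=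
      hKs.contDiffAt.div (hks.comp contDiff_fst).contDiffAt (hkpos s).ne'
    have hL2 := (hd.differentiableAt top_ne_zero').hasFDerivAt
    have hL1 := (hAd s).comp_hasFDerivAt (s, t) (hasFDerivAt_fst (𝕜 := ℝ) (p := (s, t)))
    refine Sc.mk' ((hAs.comp contDiff_fst).contDiffAt.prodMk hd) hL1 hL2 ?_
    have hline : HasDerivAt (fun τ : ℝ => (s, τ)) ((0:ℝ), (1:ℝ)) t :=
      (hasDerivAt_const t s).prodMk (hasDerivAt_id t)
    have h5 := hL2.comp_hasDerivAt t hline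
    have h6 := h5.unique ((hKt s t).div_const (k s))
    rw [h6]
    have := (hkpos s).ne'
    simp
    field_simp
  set e := Equiv.ofBijective Ψ ⟨hinj, hsurj⟩ with he
  have hr : ∀ z, Ψ (e.symm z) = z := fun z => e.apply_symm_apply z
  refine ⟨e.symm, m0, hm0pos, hm0le, ?_, e.symm.injective, ?_, ?_⟩
  · intro z m n
    apply hinj
    rw [hr, hΨn, hr]
  · intro z
    have h3 := Sc_inv hr hinj (c := J (e.symm z) / m0) (div_pos (h0 _) hm0pos).ne' (hΨS (e.symm z))
    rwa [inv_div] at h3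
  · intro z m n h
    rw [← hr z, h]
    have h4 := hΨn (0, 0) m n
    have h5 : Ψ (0, 0) = (0, 0) := Prod.ext hA0 (hB0 0)
    rw [h5] at h4
    simpa using h4

lemma exists_G (b B : ℝ → ℝ) (hb : ContDiff ℝ (⊤ : ℕ∞) b) (hB : ContDiff ℝ (⊤ : ℕ∞) B)
    (hBd : ∀ x, HasDerivAt B (b x) x) (hb0 : ∀ x, 0 ≤ b x)
    (hbk : ∀ (k : ℤ) (x : ℝ), b (x + k) = b x) (hBk : ∀ (k : ℤ) (x : ℝ), B (x + k) = B x + k)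
    (hbz : ∀ (x : ℝ) (k : ℤ), |x - k - 1/2| ≤ 19/40 → b x = 0)
    (hBz : ∀ (x : ℝ) (k : ℤ), |x - k - 1/2| ≤ 19/40 → B x = k + 1/2)
    (η : ℝ) (h0 : 0 < η) (h1 : η ≤ 1) :
    ∃ (G : ℝ × ℝ → ℝ × ℝ) (c : ℝ), 0 < c ∧ c ≤ η ∧
      (∀ (z : ℝ × ℝ) (m n : ℤ), G (z.1 + m, z.2 + n) = ((G z).1 + m, (G z).2 + n)) ∧
      (∀ z : ℝ × ℝ, (¬ ∃ m n : ℤ, z = ((m : ℝ), (n : ℝ))) → Sc G c z ∧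
        ((∃ k : ℤ, |(G z).1 - k - 1/2| ≤ η / 2) ∨ (∃ k : ℤ, |(G z).2 - k - 1/2| ≤ 9/20))) ∧
      (∀ z z' : ℝ × ℝ, (¬ ∃ m n : ℤ, z = ((m : ℝ), (n : ℝ))) →
        (¬ ∃ m n : ℤ, z' = ((m : ℝ), (n : ℝ))) → G z = G z' → z = z') := by
  obtain ⟨Γ, Γk, Γi, ΓS⟩ := exists_Gamma b B hb hB hBd hb0 hbk hBk hbz hBz η h0 h1
  obtain ⟨Φ, J, Φk, Jk, Js, J0, J1, ΦS, Φi⟩ := exists_Phi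
  obtain ⟨Θ, m0, m0p, m0l, Θk, Θi, ΘS, Θl⟩ := exists_Theta J Jk Js J0 J1
  have hl : ∀ z : ℝ × ℝ, (¬ ∃ m n : ℤ, z = ((m : ℝ), (n : ℝ))) →
      ¬ ∃ m n : ℤ, Θ z = ((m : ℝ), (n : ℝ)) := by
    rintro z hz ⟨m, n, h⟩
    exact hz ⟨m, n, Θl z m n h⟩
  refine ⟨fun z => Γ (Φ (Θ z)), η * m0, mul_pos h0 m0p, by nlinarith, ?_, ?_, ?_⟩
  · intro z m n
    simp only [Θk, Φk, Γk]
  · intro z hz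
    obtain ⟨s1, s2⟩ := ΦS _ (hl z hz)
    obtain ⟨g1, g2⟩ := ΓS _ s2
    refine ⟨?_, g2⟩
    have h3 := Sc.comp (f := fun z => Φ (Θ z)) g1 (Sc.comp (f := Θ) s1 (ΘS z))
    have h4 : J (Θ z) * (m0 / J (Θ z)) = m0 := by
      have := (J0 (Θ z)).ne'
      field_simp
    rwa [h4] at h3
  · intro z z' hz hz' h
    exact Θi (Φi _ _ (hl z hz) (hl z' hz') (Γi _ _ h))

section polar
variable {V : Type*} [NormedAddCommGroup V] [NormedSpace ℝ V]

lemma polar_deriv {I θ : V → ℝ} {dI dθ : V →L[ℝ] ℝ} {p : V} {N : ℝ}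
    (hI : HasFDerivAt I dI p) (hθ : HasFDerivAt θ dθ p) (hpos : 0 < I p + N) :
    ∃ dX dY : V →L[ℝ] ℝ,
      HasFDerivAt (fun w => √((I w + N) / Real.pi) * Real.cos (2 * Real.pi * θ w)) dX p ∧
      HasFDerivAt (fun w => √((I w + N) / Real.pi) * Real.sin (2 * Real.pi * θ w)) dY p ∧
      ∀ u v, dX u * dY v - dY u * dX v = dI u * dθ v - dθ u * dI v := by
  have hs : 0 < (I p + N) / Real.pi := div_pos hpos Real.pi_pos
  have hS : HasFDerivAt (fun w => (I w + N) / Real.pi) (Real.pi⁻¹ • dI) p := by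
    have := (hI.add_const N).const_mul Real.pi⁻¹
    refine this.congr_of_eventuallyEq (Filter.Eventually.of_forall fun w => ?_)
    simp only [div_eq_inv_mul]
  have hr := hS.sqrt hs.ne'
  have hc := (hθ.const_mul (2 * Real.pi)).cos
  have hsn := (hθ.const_mul (2 * Real.pi)).sin
  refine ⟨_, _, hr.mul hc, hr.mul hsn, fun u v => ?_⟩
  have hr0 : 0 < √((I p + N) / Real.pi) := Real.sqrt_pos.2 hs
  have hcs := Real.sin_sq_add_cos_sq (2 * Real.pi * θ p)
  simp
  set r := √((I p + N) / Real.pi)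
  set C := Real.cos (2 * Real.pi * θ p)
  set S := Real.sin (2 * Real.pi * θ p)
  have hpi := Real.pi_ne_zero
  have hrn := hr0.ne'
  field_simp
  linear_combination (4 * Real.pi ^ 2 * r ^ 2 * (dI u * dθ v - dθ u * dI v)) * hcs

lemma polar_inj {I I' θ θ' N : ℝ} (h0 : 0 < I + N) (h0' : 0 < I' + N)
    (h1 : √((I + N) / Real.pi) * Real.cos (2 * Real.pi * θ) =
      √((I' + N) / Real.pi) * Real.cos (2 * Real.pi * θ'))
    (h2 : √((I + N) / Real.pi) * Real.sin (2 * Real.pi * θ) =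
      √((I' + N) / Real.pi) * Real.sin (2 * Real.pi * θ')) :
    I = I' ∧ ∃ k : ℤ, θ = θ' + k := by
  have hs : 0 < (I + N) / Real.pi := div_pos h0 Real.pi_pos
  have hs' : 0 < (I' + N) / Real.pi := div_pos h0' Real.pi_pos
  have q1 := Real.sq_sqrt hs.le
  have q2 := Real.sq_sqrt hs'.le
  have hcs := Real.sin_sq_add_cos_sq (2 * Real.pi * θ)
  have hcs' := Real.sin_sq_add_cos_sq (2 * Real.pi * θ')
  have e : (I + N) / Real.pi = (I' + N) / Real.pi := by
    rw [← q1, ← q2]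
    have e1 : (√((I + N) / Real.pi) * Real.cos (2 * Real.pi * θ)) ^ 2 +
        (√((I + N) / Real.pi) * Real.sin (2 * Real.pi * θ)) ^ 2 =
        (√((I' + N) / Real.pi) * Real.cos (2 * Real.pi * θ')) ^ 2 +
        (√((I' + N) / Real.pi) * Real.sin (2 * Real.pi * θ')) ^ 2 := by rw [h1, h2]
    have e2 : ∀ r c s : ℝ, s ^ 2 + c ^ 2 = 1 → (r * c) ^ 2 + (r * s) ^ 2 = r ^ 2 := by
      intro r c s h
      linear_combination r ^ 2 * h
    rwa [e2 _ _ _ hcs, e2 _ _ _ hcs'] at e1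
  rw [← e] at h1 h2
  have hr0 : √((I + N) / Real.pi) ≠ 0 := (Real.sqrt_pos.2 hs).ne'
  have c1 := mul_left_cancel₀ hr0 h1
  have c2 := mul_left_cancel₀ hr0 h2
  have hang := Real.Angle.cos_sin_inj c1 c2
  obtain ⟨k, hk⟩ := Real.Angle.angle_eq_iff_two_pi_dvd_sub.1 hang
  have hpi := Real.pi_pos
  constructor
  · have := (div_left_inj' Real.pi_ne_zero).1 e
    linarith
  · refine ⟨k, ?_⟩
    have : 2 * Real.pi * (θ - θ' - k) = 0 := by linarith
    rcases mul_eq_zero.1 this with h | h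
    · linarith
    · linarith

lemma polar_smooth {I θ : V → ℝ} {p : V} {N : ℝ} (hI : ContDiffAt ℝ (⊤ : ℕ∞) I p)
    (hθ : ContDiffAt ℝ (⊤ : ℕ∞) θ p) (hpos : 0 < I p + N) :
    ContDiffAt ℝ (⊤ : ℕ∞) (fun w => √((I w + N) / Real.pi) * Real.cos (2 * Real.pi * θ w)) p ∧
    ContDiffAt ℝ (⊤ : ℕ∞) (fun w => √((I w + N) / Real.pi) * Real.sin (2 * Real.pi * θ w)) p := by
  have hs : 0 < (I p + N) / Real.pi := div_pos hpos Real.pi_pos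
  have hr : ContDiffAt ℝ (⊤ : ℕ∞) (fun w => √((I w + N) / Real.pi)) p :=
    ((hI.add contDiffAt_const).div_const _).sqrt hs.ne'
  exact ⟨hr.mul (contDiffAt_const.mul hθ).cos, hr.mul (contDiffAt_const.mul hθ).sin⟩

/-- the core computation: `dI₁∧dθ₁ + dI₂∧dθ₂ = dp∧dq + κ dy₁∧dy₂` -/
lemma core_deriv {b B : ℝ → ℝ} (hb : ContDiff ℝ (⊤ : ℕ∞) b) (hBd : ∀ x, HasDerivAt B (b x) x)
    {P Q Y1 Y2 θ1 θ2 I1 I2 : V → ℝ} {dP dQ dY1 dY2 : V →L[ℝ] ℝ} {p : V} {a c κ : ℝ}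
    (ha : a ≠ 0) (hc : c ≠ 0) (hκ : κ = (a * c)⁻¹)
    (hP : HasFDerivAt P dP p) (hQ : HasFDerivAt Q dQ p) (hY1 : HasFDerivAt Y1 dY1 p)
    (hY2 : HasFDerivAt Y2 dY2 p)
    (hθ1 : θ1 = fun w => Y1 w - a * P w) (hθ2 : θ2 = fun w => Y2 w + c * Q w)
    (hI1 : I1 = fun w => -κ * ((θ2 w - B (θ2 w)) * b (θ1 w)) + a⁻¹ * Q w)
    (hI2 : I2 = fun w => κ * (θ1 w - B (θ1 w)) + c⁻¹ * P w)
    (hbb : b (θ1 p) * b (θ2 p) = 0) :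
    ∃ dI1 dI2 dθ1 dθ2 : V →L[ℝ] ℝ, HasFDerivAt I1 dI1 p ∧ HasFDerivAt I2 dI2 p ∧
      HasFDerivAt θ1 dθ1 p ∧ HasFDerivAt θ2 dθ2 p ∧
      ∀ u v, (dI1 u * dθ1 v - dθ1 u * dI1 v) + (dI2 u * dθ2 v - dθ2 u * dI2 v) =
        (dP u * dQ v - dQ u * dP v) + κ * (dY1 u * dY2 v - dY2 u * dY1 v) := by
  have h1 : HasFDerivAt θ1 (dY1 - a • dP) p := by rw [hθ1]; exact hY1.sub (hP.const_mul a)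
  have h2 : HasFDerivAt θ2 (dY2 + c • dQ) p := by rw [hθ2]; exact hY2.add (hQ.const_mul c)
  have hbd : HasDerivAt b (deriv b (θ1 p)) (θ1 p) :=
    (hb.contDiffAt.differentiableAt top_ne_zero').hasDerivAt
  have hB1 := (hBd (θ1 p)).comp_hasFDerivAt p h1
  have hB2 := (hBd (θ2 p)).comp_hasFDerivAt p h2
  have hb1 := hbd.comp_hasFDerivAt p h1
  have k1 := (((h2.sub hB2).mul hb1).const_mul (-κ)).add (hQ.const_mul a⁻¹)
  have k2 := ((h1.sub hB1).const_mul κ).add (hP.const_mul c⁻¹)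
  refine ⟨_, _, _, _, by rw [hI1]; exact k1, by rw [hI2]; exact k2, h1, h2, fun u v => ?_⟩
  simp
  rw [hκ]
  set b1 := b (θ1 p)
  set b2 := b (θ2 p)
  field_simp
  linear_combination (-((dY1 u - a * dP u) * (dY2 v + c * dQ v) -
    (dY2 u + c * dQ u) * (dY1 v - a * dP v))) * hbb

end polar

lemma B_bound {b B : ℝ → ℝ} (hBd : ∀ x, HasDerivAt B (b x) x) (hb0 : ∀ x, 0 ≤ b x)
    (hBk : ∀ (k : ℤ) (x : ℝ), B (x + k) = B x + k) : ∃ C, ∀ x, |x - B x| ≤ C := by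
  have hm : Monotone B := monotone_of_deriv_nonneg (fun x => (hBd x).differentiableAt)
    fun x => by rw [(hBd x).deriv]; exact hb0 x
  refine ⟨|B 0| + 1, fun x => ?_⟩
  have h1 := hBk ⌊x⌋ (Int.fract x)
  rw [Int.fract_add_floor] at h1
  have h2 := hm (Int.fract_nonneg x)
  have h3 := hm (Int.fract_lt_one x).le
  have h4 := hBk 1 0
  simp at h4
  have h5 := Int.fract_add_floor x
  have h6 := Int.fract_nonneg x
  have h7 := Int.fract_lt_one x
  have h8 := neg_abs_le (B 0)
  have h9 := le_abs_self (B 0)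
  rw [abs_le]; constructor <;> linarith

/-- **Lemma 3.**  For every `R > 0` there is a smooth symplectic embedding of
`B²_R × (T² ∖ {pt})` into `ℝ⁴`, the punctured torus carrying a symplectic form of
total area one. -/
theorem disk_times_punctured_torus_embeds_in_R4 (R : ℝ) (hR : 0 < R) :
    ∃ F : Pl × Pl → E4,
      ContDiffOn ℝ (⊤ : ℕ∞) F (liftedDomain R) ∧
      -- invariance under the deck transformations: F descends to B²_R × (T² ∖ {pt})
      (∀ x z : Pl, ∀ m : Pl, IsLatticePt m → F (x, z + m) = F (x, z)) ∧
      -- the differential pulls the standard form of ℝ⁴ back to the product form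
      (∀ p ∈ liftedDomain R, ∀ u v : Pl × Pl,
        symp4 (fderiv ℝ F p u) (fderiv ℝ F p v) = area2 u.1 v.1 + area2 u.2 v.2) ∧
      -- injectivity as a map defined on B²_R × (T² ∖ {pt})
      (∀ p ∈ liftedDomain R, ∀ q ∈ liftedDomain R,
        F p = F q → p.1 = q.1 ∧ IsLatticePt (p.2 - q.2)) := by
  obtain ⟨b, B, hb, hB, hBd, hb0, hbk, hBk, ⟨Cb, hCb⟩, hbz, hBz⟩ := exists_bump
  obtain ⟨C1, hC1⟩ := B_bound hBd hb0 hBk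
  have hη0 : (0:ℝ) < 1 / (4 + 320 * R ^ 2) := by positivity
  have hη1 : 1 / (4 + 320 * R ^ 2) ≤ 1/4 := by
    apply one_div_le_one_div_of_le (by norm_num); nlinarith [sq_nonneg R]
  have hη2 : 40 * R ^ 2 * (1 / (4 + 320 * R ^ 2)) ≤ 1/8 := by
    rw [mul_one_div, div_le_div_iff₀ (by positivity) (by norm_num)]; nlinarith
  obtain ⟨η, hη⟩ : ∃ η, η = 1 / (4 + 320 * R ^ 2) := ⟨_, rfl⟩
  rw [← hη] at hη0 hη1 hη2
  obtain ⟨G, μ, hμ0, hμη, Gk, GS, Gi⟩ := exists_G b B hb hB hBd hb0 hbk hBk hbz hBz η hη0 (by linarith)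
  obtain ⟨c, hc⟩ : ∃ c, c = 1 / (40 * R) := ⟨_, rfl⟩
  obtain ⟨a, ha⟩ : ∃ a, a = 40 * R * μ := ⟨_, rfl⟩
  obtain ⟨κ, hκ⟩ : ∃ κ, κ = (a * c)⁻¹ := ⟨_, rfl⟩
  have hc0 : 0 < c := by rw [hc]; positivity
  have ha0 : 0 < a := by rw [ha]; positivity
  have hκ0 : 0 < κ := by rw [hκ]; positivity
  have hκμ : κ * μ = 1 := by rw [hκ, ha, hc]; field_simp
  have hcR : c * R ≤ 1/40 := by rw [hc]; apply le_of_eq; field_simp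
  have haR : a * R ≤ 1/8 := by
    have h1 : a * R = 40 * R ^ 2 * μ := by rw [ha]; ring
    have h2 : 40 * R ^ 2 * μ ≤ 40 * R ^ 2 * η := by gcongr
    linarith
  have hC10 : 0 ≤ C1 := (abs_nonneg _).trans (hC1 0)
  have hCb0 : 0 ≤ Cb := (hb0 0).trans (hCb 0)
  obtain ⟨P, hP⟩ : ∃ P : Pl × Pl → ℝ, P = fun w => w.1 0 := ⟨_, rfl⟩
  obtain ⟨Q, hQ⟩ : ∃ Q : Pl × Pl → ℝ, Q = fun w => w.1 1 := ⟨_, rfl⟩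
  obtain ⟨Y1, hY1⟩ : ∃ Y : Pl × Pl → ℝ, Y = fun w => (G (w.2 0, w.2 1)).1 := ⟨_, rfl⟩
  obtain ⟨Y2, hY2⟩ : ∃ Y : Pl × Pl → ℝ, Y = fun w => (G (w.2 0, w.2 1)).2 := ⟨_, rfl⟩
  obtain ⟨θ1, hθ1⟩ : ∃ θ : Pl × Pl → ℝ, θ = fun w => Y1 w - a * P w := ⟨_, rfl⟩
  obtain ⟨θ2, hθ2⟩ : ∃ θ : Pl × Pl → ℝ, θ = fun w => Y2 w + c * Q w := ⟨_, rfl⟩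
  obtain ⟨I1, hI1⟩ : ∃ I : Pl × Pl → ℝ,
      I = fun w => -κ * ((θ2 w - B (θ2 w)) * b (θ1 w)) + a⁻¹ * Q w := ⟨_, rfl⟩
  obtain ⟨I2, hI2⟩ : ∃ I : Pl × Pl → ℝ,
      I = fun w => κ * (θ1 w - B (θ1 w)) + c⁻¹ * P w := ⟨_, rfl⟩
  obtain ⟨N, hN⟩ : ∃ N, N = κ * (C1 * Cb) + a⁻¹ * R + (κ * C1 + c⁻¹ * R) + 1 := ⟨_, rfl⟩
  -- basic bounds on the domain
  have hPQ : ∀ w ∈ liftedDomain R, |P w| ≤ R ∧ |Q w| ≤ R := by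
    rintro w ⟨hw, -⟩
    rw [mem_ball_zero_iff] at hw
    have h0 := PiLp.norm_apply_le w.1 0
    have h1 := PiLp.norm_apply_le w.1 1
    rw [Real.norm_eq_abs] at h0 h1
    rw [hP, hQ]
    exact ⟨by linarith, by linarith⟩
  have hlat : ∀ w ∈ liftedDomain R, ¬ ∃ m n : ℤ, ((w.2 0, w.2 1) : ℝ × ℝ) = ((m : ℝ), (n : ℝ)) := by
    rintro w ⟨-, hw⟩ ⟨m, n, h⟩
    apply hw
    intro i
    fin_cases i
    · exact ⟨m, congrArg Prod.fst h⟩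
    · exact ⟨n, congrArg Prod.snd h⟩
  have hI1pos : ∀ w ∈ liftedDomain R, 0 < I1 w + N := by
    intro w hw
    have h1 : |(θ2 w - B (θ2 w)) * b (θ1 w)| ≤ C1 * Cb := by
      rw [abs_mul, abs_of_nonneg (hb0 (θ1 w))]
      exact mul_le_mul (hC1 _) (hCb _) (hb0 _) hC10
    have h2 : κ * ((θ2 w - B (θ2 w)) * b (θ1 w)) ≤ κ * (C1 * Cb) :=
      mul_le_mul_of_nonneg_left (abs_le.1 h1).2 hκ0.le
    have h3 : a⁻¹ * (-R) ≤ a⁻¹ * Q w :=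
      mul_le_mul_of_nonneg_left (abs_le.1 (hPQ w hw).2).1 (inv_pos.2 ha0).le
    have h4 : 0 ≤ κ * C1 := by positivity
    have h5 : 0 ≤ c⁻¹ * R := by positivity
    rw [hI1, hN]
    simp only
    linarith
  have hI2pos : ∀ w ∈ liftedDomain R, 0 < I2 w + N := by
    intro w hw
    have h2 : κ * (-C1) ≤ κ * (θ1 w - B (θ1 w)) :=
      mul_le_mul_of_nonneg_left (abs_le.1 (hC1 _)).1 hκ0.le
    have h3 : c⁻¹ * (-R) ≤ c⁻¹ * P w :=
      mul_le_mul_of_nonneg_left (abs_le.1 (hPQ w hw).1).1 (inv_pos.2 hc0).le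
    have h4 : 0 ≤ κ * (C1 * Cb) := by positivity
    have h5 : 0 ≤ a⁻¹ * R := by positivity
    rw [hI2, hN]
    simp only
    linarith
  have hbb : ∀ w ∈ liftedDomain R, b (θ1 w) * b (θ2 w) = 0 := by
    intro w hw
    obtain ⟨hp, hq⟩ := hPQ w hw
    have hap : |a * P w| ≤ 1/8 := by
      rw [abs_mul, abs_of_pos ha0]
      exact (mul_le_mul_of_nonneg_left hp ha0.le).trans haR
    have hcq : |c * Q w| ≤ 1/40 := by
      rw [abs_mul, abs_of_pos hc0]
      exact (mul_le_mul_of_nonneg_left hq hc0.le).trans hcR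
    rw [abs_le] at hap hcq
    rcases (GS _ (hlat w hw)).2 with ⟨k, hk⟩ | ⟨k, hk⟩
    · rw [hbz (θ1 w) k, zero_mul]
      rw [hθ1, hY1]
      rw [abs_le] at hk ⊢
      constructor <;> simp only <;> linarith
    · rw [hbz (θ2 w) k, mul_zero]
      rw [hθ2, hY2]
      rw [abs_le] at hk ⊢
      constructor <;> simp only <;> linarith
  -- smoothness
  have hPs : ContDiff ℝ (⊤ : ℕ∞) P := by rw [hP]; fun_prop
  have hQs : ContDiff ℝ (⊤ : ℕ∞) Q := by rw [hQ]; fun_prop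
  have hGs : ∀ w ∈ liftedDomain R,
      ContDiffAt ℝ (⊤ : ℕ∞) (fun w : Pl × Pl => G (w.2 0, w.2 1)) w := by
    intro w hw
    exact ContDiffAt.comp w (g := G) (f := fun w : Pl × Pl => ((w.2 0, w.2 1) : ℝ × ℝ))
      (GS _ (hlat w hw)).1.1 (by fun_prop)
  have hY1s : ∀ w ∈ liftedDomain R, ContDiffAt ℝ (⊤ : ℕ∞) Y1 w := by
    intro w hw; rw [hY1]; exact (hGs w hw).fst
  have hY2s : ∀ w ∈ liftedDomain R, ContDiffAt ℝ (⊤ : ℕ∞) Y2 w := by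
    intro w hw; rw [hY2]; exact (hGs w hw).snd
  have hθ1s : ∀ w ∈ liftedDomain R, ContDiffAt ℝ (⊤ : ℕ∞) θ1 w := by
    intro w hw; rw [hθ1]; exact (hY1s w hw).sub (contDiffAt_const.mul hPs.contDiffAt)
  have hθ2s : ∀ w ∈ liftedDomain R, ContDiffAt ℝ (⊤ : ℕ∞) θ2 w := by
    intro w hw; rw [hθ2]; exact (hY2s w hw).add (contDiffAt_const.mul hQs.contDiffAt)
  have hI1s : ∀ w ∈ liftedDomain R, ContDiffAt ℝ (⊤ : ℕ∞) I1 w := by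
    intro w hw; rw [hI1]
    exact (contDiffAt_const.mul (((hθ2s w hw).sub (hB.contDiffAt.comp w (hθ2s w hw))).mul
      (hb.contDiffAt.comp w (hθ1s w hw)))).add (contDiffAt_const.mul hQs.contDiffAt)
  have hI2s : ∀ w ∈ liftedDomain R, ContDiffAt ℝ (⊤ : ℕ∞) I2 w := by
    intro w hw; rw [hI2]
    exact (contDiffAt_const.mul ((hθ1s w hw).sub (hB.contDiffAt.comp w (hθ1s w hw)))).add
      (contDiffAt_const.mul hPs.contDiffAt)
  obtain ⟨F, hF⟩ : ∃ F : Pl × Pl → E4, F = fun w =>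
    !₂[√((I1 w + N) / Real.pi) * Real.cos (2 * Real.pi * θ1 w),
       √((I1 w + N) / Real.pi) * Real.sin (2 * Real.pi * θ1 w),
       √((I2 w + N) / Real.pi) * Real.cos (2 * Real.pi * θ2 w),
       √((I2 w + N) / Real.pi) * Real.sin (2 * Real.pi * θ2 w)] := ⟨_, rfl⟩
  have hF0 : (fun w => F w 0) = fun w => √((I1 w + N) / Real.pi) * Real.cos (2 * Real.pi * θ1 w) := by
    rw [hF]; rfl
  have hF1 : (fun w => F w 1) = fun w => √((I1 w + N) / Real.pi) * Real.sin (2 * Real.pi * θ1 w) := by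
    rw [hF]; rfl
  have hF2 : (fun w => F w 2) = fun w => √((I2 w + N) / Real.pi) * Real.cos (2 * Real.pi * θ2 w) := by
    rw [hF]; rfl
  have hF3 : (fun w => F w 3) = fun w => √((I2 w + N) / Real.pi) * Real.sin (2 * Real.pi * θ2 w) := by
    rw [hF]; rfl
  have hFs : ∀ w ∈ liftedDomain R, ContDiffAt ℝ (⊤ : ℕ∞) F w := by
    intro w hw
    have h1 := polar_smooth (hI1s w hw) (hθ1s w hw) (hI1pos w hw)
    have h2 := polar_smooth (hI2s w hw) (hθ2s w hw) (hI2pos w hw)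
    rw [contDiffAt_euclidean]
    intro i
    fin_cases i
    · exact hF0 ▸ h1.1
    · exact hF1 ▸ h1.2
    · exact hF2 ▸ h2.1
    · exact hF3 ▸ h2.2
  refine ⟨F, fun w hw => (hFs w hw).contDiffWithinAt, ?_, ?_, ?_⟩
  · intro x z m hm
    obtain ⟨m0, hm0⟩ := hm 0
    obtain ⟨m1, hm1⟩ := hm 1
    have e1 : θ1 (x, z + m) = θ1 (x, z) + m0 := by
      simp only [hθ1, hY1, hP, PiLp.add_apply, hm0, hm1]
      rw [Gk (z 0, z 1) m0 m1]; ring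
    have e2 : θ2 (x, z + m) = θ2 (x, z) + m1 := by
      simp only [hθ2, hY2, hQ, PiLp.add_apply, hm0, hm1]
      rw [Gk (z 0, z 1) m0 m1]; ring
    have i1 : I1 (x, z + m) = I1 (x, z) := by
      simp only [hI1, e1, e2, hbk, hBk, hQ]; ring
    have i2 : I2 (x, z + m) = I2 (x, z) := by
      simp only [hI2, e1, e2, hbk, hBk, hP]; ring
    have hcos : ∀ (t : ℝ) (k : ℤ), Real.cos (2 * Real.pi * (t + k)) = Real.cos (2 * Real.pi * t) := by
      intro t k
      rw [← Real.cos_add_int_mul_two_pi (2 * Real.pi * t) k]; congr 1; ring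
    have hsin : ∀ (t : ℝ) (k : ℤ), Real.sin (2 * Real.pi * (t + k)) = Real.sin (2 * Real.pi * t) := by
      intro t k
      rw [← Real.sin_add_int_mul_two_pi (2 * Real.pi * t) k]; congr 1; ring
    simp only [hF, e1, e2, i1, i2, hcos, hsin]
  · intro p hp u v
    have dP := (hPs.contDiffAt (x := p).differentiableAt top_ne_zero').hasFDerivAt
    have dQ := (hQs.contDiffAt (x := p).differentiableAt top_ne_zero').hasFDerivAt
    have dY1 := ((hY1s p hp).differentiableAt top_ne_zero').hasFDerivAt
    have dY2 := ((hY2s p hp).differentiableAt top_ne_zero').hasFDerivAt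
    obtain ⟨dI1, dI2, dθ1, dθ2, h1, h2, h3, h4, h5⟩ := core_deriv hb hBd ha0.ne' hc0.ne' hκ dP dQ dY1 dY2
      hθ1 hθ2 hI1 hI2 (hbb p hp)
    obtain ⟨dX1, dX2, x1, x2, x3⟩ := polar_deriv h1 h3 (hI1pos p hp)
    obtain ⟨dX3, dX4, x4, x5, x6⟩ := polar_deriv h2 h4 (hI2pos p hp)
    have hFd := ((hFs p hp).differentiableAt top_ne_zero').hasFDerivAt
    have hFi : ∀ (i : Fin 4) (u : Pl × Pl) (L : Pl × Pl →L[ℝ] ℝ), HasFDerivAt (fun w => F w i) L p →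
        (fderiv ℝ F p u) i = L u := by
      intro i u L hL
      have h6 := (EuclideanSpace.proj i : E4 →L[ℝ] ℝ).hasFDerivAt.comp p hFd
      have h7 := hL.unique h6
      rw [h7]; rfl
    rw [← hF0] at x1
    rw [← hF1] at x2
    rw [← hF2] at x4
    rw [← hF3] at x5
    simp only [symp4]
    rw [hFi 0 u _ x1, hFi 1 u _ x2, hFi 2 u _ x4, hFi 3 u _ x5,
      hFi 0 v _ x1, hFi 1 v _ x2, hFi 2 v _ x4, hFi 3 v _ x5, x3, x6, h5]
    -- the derivatives of the coordinates
    have hPd : ∀ u, fderiv ℝ P p u = u.1 0 := by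
      intro u
      have h6 := ((EuclideanSpace.proj 0 : Pl →L[ℝ] ℝ).comp
        (ContinuousLinearMap.fst ℝ Pl Pl)).hasFDerivAt (x := p)
      have h7 : HasFDerivAt P ((EuclideanSpace.proj 0 : Pl →L[ℝ] ℝ).comp
        (ContinuousLinearMap.fst ℝ Pl Pl)) p := by rw [hP]; exact h6
      rw [h7.fderiv]; rfl
    have hQd : ∀ u, fderiv ℝ Q p u = u.1 1 := by
      intro u
      have h6 := ((EuclideanSpace.proj 1 : Pl →L[ℝ] ℝ).comp
        (ContinuousLinearMap.fst ℝ Pl Pl)).hasFDerivAt (x := p)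
      have h7 : HasFDerivAt Q ((EuclideanSpace.proj 1 : Pl →L[ℝ] ℝ).comp
        (ContinuousLinearMap.fst ℝ Pl Pl)) p := by rw [hQ]; exact h6
      rw [h7.fderiv]; rfl
    obtain ⟨L, hL⟩ : ∃ L : Pl × Pl →L[ℝ] ℝ × ℝ, L =
      ((EuclideanSpace.proj 0 : Pl →L[ℝ] ℝ).comp
        (ContinuousLinearMap.snd ℝ Pl Pl)).prod
      ((EuclideanSpace.proj 1 : Pl →L[ℝ] ℝ).comp
        (ContinuousLinearMap.snd ℝ Pl Pl)) := ⟨_, rfl⟩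
    have hLa : ∀ u, L u = (u.2 0, u.2 1) := by intro u; rw [hL]; rfl
    have hSc := (GS _ (hlat p hp)).1
    have hGd : HasFDerivAt G (fderiv ℝ G (p.2 0, p.2 1)) (L p) := by
      rw [hLa]; exact (hSc.1.differentiableAt top_ne_zero').hasFDerivAt
    have hGL := hGd.comp p (L.hasFDerivAt (x := p))
    have hfun : G ∘ L = fun w : Pl × Pl => G (w.2 0, w.2 1) := by
      funext w; simp only [Function.comp_apply, hLa]
    rw [hfun] at hGL
    have hY1d : ∀ u, fderiv ℝ Y1 p u = (fderiv ℝ G (p.2 0, p.2 1) (u.2 0, u.2 1)).1 := by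
      intro u
      have h7 : HasFDerivAt Y1 ((ContinuousLinearMap.fst ℝ ℝ ℝ).comp
        ((fderiv ℝ G (p.2 0, p.2 1)).comp L)) p := by rw [hY1]; exact hGL.fst
      rw [h7.fderiv, ← hLa u]; rfl
    have hY2d : ∀ u, fderiv ℝ Y2 p u = (fderiv ℝ G (p.2 0, p.2 1) (u.2 0, u.2 1)).2 := by
      intro u
      have h7 : HasFDerivAt Y2 ((ContinuousLinearMap.snd ℝ ℝ ℝ).comp
        ((fderiv ℝ G (p.2 0, p.2 1)).comp L)) p := by rw [hY2]; exact hGL.snd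
      rw [h7.fderiv, ← hLa u]; rfl
    have hW := hSc.2 (u.2 0, u.2 1) (v.2 0, v.2 1)
    simp only [W] at hW
    rw [hPd, hPd, hQd, hQd, hY1d, hY1d, hY2d, hY2d, hW, ← mul_assoc, hκμ, one_mul]
    simp only [area2]
  · intro p hp q hq h
    have f0 : F p 0 = F q 0 := by rw [h]
    have f1 : F p 1 = F q 1 := by rw [h]
    have f2 : F p 2 = F q 2 := by rw [h]
    have f3 : F p 3 = F q 3 := by rw [h]
    have g0 := fun w => congrFun hF0 w
    have g1 := fun w => congrFun hF1 w
    have g2 := fun w => congrFun hF2 w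
    have g3 := fun w => congrFun hF3 w
    simp only at g0 g1 g2 g3
    rw [g0, g0] at f0
    rw [g1, g1] at f1
    rw [g2, g2] at f2
    rw [g3, g3] at f3
    obtain ⟨i1, k, t1⟩ := polar_inj (hI1pos p hp) (hI1pos q hq) f0 f1
    obtain ⟨i2, l, t2⟩ := polar_inj (hI2pos p hp) (hI2pos q hq) f2 f3
    simp only [hI1] at i1
    simp only [hI2] at i2
    rw [t1, t2, hbk, hBk] at i1
    rw [t1, hBk] at i2
    have eQ : Q p = Q q := by
      have : a⁻¹ * Q p = a⁻¹ * Q q := by linarith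
      exact mul_left_cancel₀ (inv_pos.2 ha0).ne' this
    have eP : P p = P q := by
      have : c⁻¹ * P p = c⁻¹ * P q := by linarith
      exact mul_left_cancel₀ (inv_pos.2 hc0).ne' this
    simp only [hθ1, eP] at t1
    simp only [hθ2, eQ] at t2
    have y1 : Y1 p = Y1 q + k := by linarith
    have y2 : Y2 p = Y2 q + l := by linarith
    simp only [hY1] at y1
    simp only [hY2] at y2
    simp only [hP] at eP
    simp only [hQ] at eQ
    have hsh : ¬ ∃ m n : ℤ, ((q.2 0 + k, q.2 1 + l) : ℝ × ℝ) = ((m : ℝ), (n : ℝ)) := by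
      rintro ⟨m, n, h⟩
      apply hlat q hq
      have h1 : q.2 0 + k = m := congrArg Prod.fst h
      have h2 : q.2 1 + l = n := congrArg Prod.snd h
      refine ⟨m - k, n - l, Prod.ext ?_ ?_⟩
      · push_cast; linarith
      · push_cast; linarith
    have hG : G (p.2 0, p.2 1) = G (q.2 0 + k, q.2 1 + l) := by
      rw [Gk (q.2 0, q.2 1) k l]
      exact Prod.ext y1 y2
    have hz := Gi _ _ (hlat p hp) hsh hG
    have z0 : p.2 0 = q.2 0 + k := congrArg Prod.fst hz
    have z1 : p.2 1 = q.2 1 + l := congrArg Prod.snd hz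
    refine ⟨?_, ?_⟩
    · ext i
      fin_cases i
      · exact eP
      · exact eQ
    · intro i
      fin_cases i
      · exact ⟨k, by simp [z0]⟩
      · exact ⟨l, by simp [z1]⟩
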